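/- arXiv:2307.14769 — 2 statements merged into one kernel-verified Lean document; each statement's English description precedes it below -/
import Mathlib

section
/- Every spherical polygon on the unit 2-sphere that has no self-intersection and all of whose interior angles are strictly less than π is contained in a closed hemisphere. -/
noncomputable section
open Real
open scoped RealInnerProductSpace

/-- Euclidean 3-space; the unit sphere in it is the 2-sphere `S²`. -/
abbrev E3 : Type := EuclideanSpace ℝ (Fin 3)

/-- The determinant (triple product) of three vectors in `ℝ³`.  For unit
vectors `p, x, q`, the condition `0 < det3 p x q` says that `q` lies strictly
on the left of the oriented great circle through `p` and `x`; at a vertex `x`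
of a spherical polygon with neighbours `p, q` this is equivalent to the
interior angle at `x` (measured on the left side) being strictly less
than `π`. -/
def det3 (u v w : E3) : ℝ :=
  u 0 * (v 1 * w 2 - v 2 * w 1) - u 1 * (v 0 * w 2 - v 2 * w 0) +
    u 2 * (v 0 * w 1 - v 1 * w 0)

/-- The (short) geodesic arc on the unit sphere joining two unit vectors
`v` and `w`: the radial projection of the segment between them. -/
def arcSeg (v w : E3) : Set E3 :=
  {x | ∃ a b : ℝ, 0 ≤ a ∧ 0 ≤ b ∧ 0 < a + b ∧
    x = ‖a • v + b • w‖⁻¹ • (a • v + b • w)}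

/-- The spherical (great-circle) distance between two unit vectors. -/
def sdist (v w : E3) : ℝ := Real.arccos ⟪v, w⟫

/-- The spherical angle at `x` between the geodesics from `x` toward `p` and
from `x` toward `q`: the angle between the tangent directions, valued
in `[0, π]`. -/
def sangle (p x q : E3) : ℝ :=
  InnerProductGeometry.angle (p - ⟪p, x⟫ • x) (q - ⟪q, x⟫ • x)


/-- No common ray of the two cones. -/
def ND (p q r s : E3) : Prop :=
  ∀ α β γ δ : ℝ, 0 ≤ α → 0 ≤ β → 0 ≤ γ → 0 ≤ δ → α • p + β • q = γ • r + δ • s →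
    α = 0 ∧ β = 0 ∧ γ = 0 ∧ δ = 0

theorem ND.symm {p q r s : E3} (h : ND p q r s) : ND r s p q := by
  intro α β γ δ h1 h2 h3 h4 e
  obtain ⟨a, b, c, d⟩ := h γ δ α β h3 h4 h1 h2 e.symm
  exact ⟨c, d, a, b⟩

theorem ND.swap {p q r s : E3} (h : ND p q r s) : ND q p r s := by
  intro α β γ δ h1 h2 h3 h4 e
  obtain ⟨a, b, c, d⟩ := h β α γ δ h2 h1 h3 h4 (by rw [add_comm]; exact e)
  exact ⟨b, a, c, d⟩

theorem det_cyc (a b c : E3) : det3 a b c = det3 b c a := by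
  unfold det3; ring

theorem det_swap (a b c : E3) : det3 a b c = - det3 a c b := by
  unfold det3; ring

theorem det_swap' (a b c : E3) : det3 a b c = - det3 b a c := by
  unfold det3; ring

theorem det_lin (p q x y : E3) (α β : ℝ) :
    det3 p q (α • x + β • y) = α * det3 p q x + β * det3 p q y := by
  simp [det3]; ring

theorem det_l (p q : E3) : det3 p q p = 0 := by unfold det3; ring
theorem det_r (p q : E3) : det3 p q q = 0 := by unfold det3; ring

theorem cramer3 (a b c z : E3) :
    det3 a b c • z = det3 b c z • a + det3 c a z • b + det3 a b z • c := by
  ext j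
  fin_cases j <;> simp [det3] <;> ring

theorem pluck (a i b k d : E3) : det3 a i d * det3 b a k - det3 a i k * det3 b a d
    = det3 a i b * det3 a k d := by
  unfold det3; ring

theorem edge_cone {o p q r z : E3} (h1 : 0 < det3 o p q) (h2 : 0 < det3 p q r)
    (h0 : det3 p q z = 0) (h3 : 0 ≤ det3 o p z) (h4 : 0 ≤ det3 q r z) :
    ∃ α β : ℝ, 0 ≤ α ∧ 0 ≤ β ∧ z = α • p + β • q := by
  have e := cramer3 o p q z
  rw [h0, zero_smul, zero_add] at e
  have e' : z = (det3 q o z / det3 o p q) • p + (det3 o p z / det3 o p q) • q := by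
    have : z = (det3 o p q)⁻¹ • (det3 o p q • z) := by
      rw [smul_smul, inv_mul_cancel₀ h1.ne', one_smul]
    rw [e, smul_add, smul_smul, smul_smul, ← div_eq_inv_mul, ← div_eq_inv_mul] at this
    exact this
  refine ⟨_, _, ?_, by positivity, e'⟩
  rw [e', det_lin, det_l, ← det_cyc p q r] at h4
  rw [mul_zero, add_zero] at h4
  exact nonneg_of_mul_nonneg_left h4 h2

theorem exit_lemma (s : Finset ℕ) (p q : ℕ → E3) (x y : E3)
    (hs : ∀ z, ∀ e ∈ s, (∀ e' ∈ s, 0 ≤ det3 (p e') (q e') z) → det3 (p e) (q e) z = 0 →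
      ∃ α β : ℝ, 0 ≤ α ∧ 0 ≤ β ∧ z = α • p e + β • q e)
    (hx : ∀ e ∈ s, 0 < det3 (p e) (q e) x ∨ (det3 (p e) (q e) x = 0 ∧ 0 < det3 (p e) (q e) y)) :
    (∀ e ∈ s, 0 < det3 (p e) (q e) y) ∨
    ∃ e ∈ s, 0 < det3 (p e) (q e) x ∧ ∃ t α β : ℝ, 0 < t ∧ t ≤ 1 ∧ 0 ≤ α ∧ 0 ≤ β ∧
      (1 - t) • x + t • y = α • p e + β • q e := by
  by_cases hb : ∀ e ∈ s, 0 < det3 (p e) (q e) y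
  · exact Or.inl hb
  right
  push Not at hb
  obtain ⟨e0, he0, hy0⟩ := hb
  have hne : (s.filter (fun e => det3 (p e) (q e) y ≤ 0)).Nonempty :=
    ⟨e0, by simp [he0, hy0]⟩
  obtain ⟨e, he, hmin⟩ := Finset.exists_min_image _
    (fun e => det3 (p e) (q e) x / (det3 (p e) (q e) x - det3 (p e) (q e) y)) hne
  simp only [Finset.mem_filter] at he hmin
  have hxe : ∀ e ∈ s, det3 (p e) (q e) y ≤ 0 → 0 < det3 (p e) (q e) x := by
    intro e he h
    rcases hx e he with h' | h'
    · exact h'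
    · linarith [h'.2]
  have hX := hxe e he.1 he.2
  set t := det3 (p e) (q e) x / (det3 (p e) (q e) x - det3 (p e) (q e) y) with ht
  have hden : 0 < det3 (p e) (q e) x - det3 (p e) (q e) y := by linarith [he.2]
  have ht0 : 0 < t := div_pos hX hden
  have ht1 : t ≤ 1 := by rw [ht, div_le_one hden]; linarith [he.2]
  obtain ⟨α, β, h1, h2, h3⟩ := hs ((1 - t) • x + t • y) e he.1 (by
    intro e' he'
    rw [det_lin]
    by_cases hy : det3 (p e') (q e') y ≤ 0
    · have h := hmin e' ⟨he', hy⟩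
      have hX' := hxe e' he' hy
      rw [le_div_iff₀ (by linarith)] at h
      linarith
    · push Not at hy
      have : 0 ≤ det3 (p e') (q e') x := by
        rcases hx e' he' with h | h
        · exact h.le
        · exact h.1.ge
      have : 0 ≤ (1 - t) * det3 (p e') (q e') x := mul_nonneg (by linarith) this
      positivity) (by
    rw [det_lin, ht]; field_simp; ring)
  exact ⟨e, he.1, hX, t, α, β, ht0, ht1, h1, h2, h3⟩

theorem tri_exit {a i b : E3} (x y : E3) (h : 0 < det3 a i b)
    (h1 : 0 < det3 a i x ∨ (det3 a i x = 0 ∧ 0 < det3 a i y))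
    (h2 : 0 < det3 i b x ∨ (det3 i b x = 0 ∧ 0 < det3 i b y))
    (h3 : 0 < det3 b a x ∨ (det3 b a x = 0 ∧ 0 < det3 b a y)) :
    (0 < det3 a i y ∧ 0 < det3 i b y ∧ 0 < det3 b a y) ∨
    ∃ t α β : ℝ, 0 < t ∧ t ≤ 1 ∧ 0 ≤ α ∧ 0 ≤ β ∧
      ((1 - t) • x + t • y = α • a + β • i ∨ (1 - t) • x + t • y = α • i + β • b ∨
        ((1 - t) • x + t • y = α • b + β • a ∧ 0 < det3 b a x)) := by
  have h' : 0 < det3 i b a := by rw [← det_cyc]; exact h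
  have h'' : 0 < det3 b a i := by rw [det_cyc]; exact h
  have key := exit_lemma (Finset.range 3) (fun j => if j = 0 then a else if j = 1 then i else b)
    (fun j => if j = 0 then i else if j = 1 then b else a) x y (by
      intro z e he hz h0
      have z0 := hz 0 (by simp)
      have z1 := hz 1 (by simp)
      have z2 := hz 2 (by simp)
      simp at z0 z1 z2
      have : e < 3 := by simpa using he
      interval_cases e
      · simp at h0; simpa using edge_cone h'' h h0 z2 z1
      · simp at h0; simpa using edge_cone h h' h0 z0 z2
      · simp at h0; simpa using edge_cone h' h'' h0 z1 z0) (by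
      intro e he
      have : e < 3 := by simpa using he
      interval_cases e
      · simpa using h1
      · simpa using h2
      · simpa using h3)
  rcases key with k | ⟨e, he, hX, t, α, β, t0, t1, hα, hβ, hz⟩
  · left
    have z0 := k 0 (by simp)
    have z1 := k 1 (by simp)
    have z2 := k 2 (by simp)
    simp at z0 z1 z2
    exact ⟨z0, z1, z2⟩
  · right
    refine ⟨t, α, β, t0, t1, hα, hβ, ?_⟩
    have : e < 3 := by simpa using he
    interval_cases e
    · left; simpa using hz
    · right; left; simpa using hz
    · right; right; simp at hz hX; exact ⟨hz, hX⟩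

theorem indep {a b c : E3} (h : det3 a b c ≠ 0) {x y z : ℝ}
    (e : x • a + y • b = z • c) : x = 0 ∧ y = 0 ∧ z = 0 := by
  have e1 : det3 b c (x • a + y • b) = det3 b c (z • c + (0:ℝ) • c) := by rw [e]; simp
  have e2 : det3 c a (x • a + y • b) = det3 c a (z • c + (0:ℝ) • c) := by rw [e]; simp
  have e3 : det3 a b (x • a + y • b) = det3 a b (z • c + (0:ℝ) • c) := by rw [e]; simp
  have h1 : det3 b c a = det3 a b c := by unfold det3; ring
  have h2 : det3 c a b = det3 a b c := by unfold det3; ring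
  rw [det_lin, det_lin] at e1 e2 e3
  simp only [det_l, det_r, h1, h2] at e1 e2 e3
  simp [h] at e1 e2 e3
  exact ⟨e1, e2, e3⟩

/-- if not all zero then all positive -/
theorem pos4 {a b c d : E3} (h1 : det3 a b c ≠ 0) (h2 : det3 a b d ≠ 0) (h3 : det3 c d a ≠ 0)
    (h4 : det3 c d b ≠ 0) {α β γ δ : ℝ} (hα : 0 ≤ α) (hβ : 0 ≤ β) (hγ : 0 ≤ γ) (hδ : 0 ≤ δ)
    (e : α • a + β • b = γ • c + δ • d) :
    (α = 0 ∧ β = 0 ∧ γ = 0 ∧ δ = 0) ∨ (0 < α ∧ 0 < β ∧ 0 < γ ∧ 0 < δ) := by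
  rcases hα.eq_or_lt with r | hα
  · subst r
    left
    obtain ⟨x, y, z⟩ := indep h4 (x := γ) (y := δ) (z := β) (by rw [← e]; simp)
    exact ⟨rfl, z, x, y⟩
  rcases hβ.eq_or_lt with r | hβ
  · subst r
    left
    obtain ⟨x, y, z⟩ := indep h3 (x := γ) (y := δ) (z := α) (by rw [← e]; simp)
    exact ⟨z, rfl, x, y⟩
  rcases hγ.eq_or_lt with r | hγ
  · subst r
    left
    obtain ⟨x, y, z⟩ := indep h2 (x := α) (y := β) (z := δ) (by rw [e]; simp)
    exact ⟨x, y, rfl, z⟩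
  rcases hδ.eq_or_lt with r | hδ
  · subst r
    left
    obtain ⟨x, y, z⟩ := indep h1 (x := α) (y := β) (z := γ) (by rw [e]; simp)
    exact ⟨x, y, z, rfl⟩
  right
  exact ⟨hα, hβ, hγ, hδ⟩

/-- generic, simple, locally convex polygon -/
structure Pol (n : ℕ) (w : ℕ → E3) : Prop where
  hn : 3 ≤ n
  c : ∀ i j k, j = i + 1 → k = i + 2 → k < n → 0 < det3 (w i) (w j) (w k)
  c1 : ∀ i j, i + 2 = n → j + 1 = n → 0 < det3 (w i) (w j) (w 0)
  c2 : ∀ i, i + 1 = n → 0 < det3 (w i) (w 0) (w 1)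
  g : ∀ i j k, i < j → j < k → k < n → det3 (w i) (w j) (w k) ≠ 0
  s : ∀ i i' j j', i' = i + 1 → j' = j + 1 → i' < j → j' < n → ND (w i) (w i') (w j) (w j')
  s' : ∀ a j j', a + 1 = n → j' = j + 1 → 0 < j → j' < a → ND (w a) (w 0) (w j) (w j')

theorem Pol.gen {n : ℕ} {w : ℕ → E3} (h : Pol n w) {i j k : ℕ} (hi : i < n) (hj : j < n)
    (hk : k < n) (h1 : i ≠ j) (h2 : j ≠ k) (h3 : i ≠ k) : det3 (w i) (w j) (w k) ≠ 0 := by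
  rcases lt_or_gt_of_ne h1 with a | a <;> rcases lt_or_gt_of_ne h2 with b | b <;>
    rcases lt_or_gt_of_ne h3 with c | c
  · exact h.g _ _ _ a b hk
  · omega
  · rw [det_swap]; exact neg_ne_zero.2 (h.g _ _ _ c b hj)
  · rw [← det_cyc]; exact h.g _ _ _ c a hj
  · rw [det_swap']; exact neg_ne_zero.2 (h.g _ _ _ a c hk)
  · rw [det_cyc]; exact h.g _ _ _ b c hi
  · omega
  · rw [det_cyc, det_swap']; exact neg_ne_zero.2 (h.g _ _ _ b a hi)

/-- rotation -/
def rot (n : ℕ) (w : ℕ → E3) : ℕ → E3 := fun j => if j + 1 = n then w 0 else w (j + 1)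

theorem rot_last {n : ℕ} (w : ℕ → E3) {j : ℕ} (h : j + 1 = n) : rot n w j = w 0 := by
  simp [rot, h]
theorem rot_lt {n : ℕ} (w : ℕ → E3) {j : ℕ} (h : j + 1 ≠ n) : rot n w j = w (j + 1) := by
  simp [rot, h]

theorem Pol.rot {n : ℕ} {w : ℕ → E3} (h : Pol n w) : Pol n (rot n w) := by
  have hn := h.hn
  refine ⟨hn, ?_, ?_, ?_, ?_, ?_, ?_⟩
  · intro i j k hj hk hkn
    rw [rot_lt w (j := i) (by omega), rot_lt w (j := j) (by omega)]
    by_cases hk' : k + 1 = n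
    · rw [rot_last w hk']; exact h.c1 _ _ (by omega) (by omega)
    · rw [rot_lt w hk']; exact h.c _ _ _ (by omega) (by omega) (by omega)
  · intro i j hi hj
    rw [rot_lt w (j := i) (by omega), rot_last w hj, rot_lt w (j := 0) (by omega)]
    exact h.c2 _ (by omega)
  · intro i hi
    rw [rot_last w hi, rot_lt w (j := 0) (by omega), rot_lt w (j := 1) (by omega)]
    exact h.c _ _ _ (by omega) (by omega) (by omega)
  · intro i j k hi hj hk
    rw [rot_lt w (j := i) (by omega), rot_lt w (j := j) (by omega)]
    by_cases hk' : k + 1 = n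
    · rw [rot_last w hk']; exact h.gen (by omega) (by omega) (by omega) (by omega) (by omega) (by omega)
    · rw [rot_lt w hk']; exact h.g _ _ _ (by omega) (by omega) (by omega)
  · intro i i' j j' hi hj hl hn'
    rw [rot_lt w (j := i) (by omega), rot_lt w (j := i') (by omega), rot_lt w (j := j) (by omega)]
    by_cases hk' : j' + 1 = n
    · rw [rot_last w hk']
      exact (h.s' _ _ _ (by omega) (by omega) (by omega) (by omega)).symm
    · rw [rot_lt w hk']; exact h.s _ _ _ _ (by omega) (by omega) (by omega) (by omega)
  · intro a j j' ha hj h0 hl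
    rw [rot_last w ha, rot_lt w (j := 0) (by omega), rot_lt w (j := j) (by omega),
      rot_lt w (j := j') (by omega)]
    exact h.s _ _ _ _ (by omega) (by omega) (by omega) (by omega)

theorem Pol.sub {n : ℕ} {w : ℕ → E3} (h : Pol n w) {k a : ℕ} (ha : a + 1 = n) (hk : k + 2 ≤ a)
    (h1 : ∀ l, l + 1 = a → 0 < det3 (w l) (w a) (w k))
    (h2 : 0 < det3 (w a) (w k) (w (k + 1)))
    (h3 : ∀ j, k < j → j + 1 < a → ND (w a) (w k) (w j) (w (j + 1))) :
    Pol (n - k) (fun j => w (j + k)) := by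
  refine ⟨by omega, ?_, ?_, ?_, ?_, ?_, ?_⟩
  · intro i j l hi hj hl
    exact h.c _ _ _ (by omega) (by omega) (by omega)
  · intro i j hi hj
    have : j + k = a := by omega
    simp only [this, zero_add]
    exact h1 _ (by omega)
  · intro i hi
    have : i + k = a := by omega
    simp only [this, zero_add]
    rw [add_comm 1 k]; exact h2
  · intro i j l hi hj hl
    exact h.g _ _ _ (by omega) (by omega) (by omega)
  · intro i i' j j' hi hj hl hn'
    exact h.s _ _ _ _ (by omega) (by omega) (by omega) (by omega)
  · intro b j j' hb hj h0 hl
    have : b + k = a := by omega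
    simp only [this, zero_add]
    have : j' + k = j + k + 1 := by omega
    rw [this]
    exact h3 _ (by omega) (by omega)

/-- convexity -/
structure Cvx (n : ℕ) (w : ℕ → E3) : Prop where
  e : ∀ i j k, j = i + 1 → j < n → k < n → k ≠ i → k ≠ j → 0 < det3 (w i) (w j) (w k)
  e' : ∀ a k, a + 1 = n → 0 < k → k < a → 0 < det3 (w a) (w 0) (w k)

/-- full convexity from the last edge -/
theorem cvx_of_last {n : ℕ} (H : ∀ w, Pol n w → ∀ i j k, i + 2 = n → j + 1 = n → k < i →
    0 < det3 (w i) (w j) (w k)) (w : ℕ → E3) (h : Pol n w) : Cvx n w := by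
  have hE' : ∀ w, Pol n w → ∀ a k, a + 1 = n → 0 < k → k < a → 0 < det3 (w a) (w 0) (w k) := by
    intro w h a k ha h0 hk
    have := H _ h.rot (a - 1) a (k - 1) (by omega) ha (by omega)
    rw [rot_lt w (by omega), rot_last w ha, rot_lt w (by omega)] at this
    rwa [Nat.sub_add_cancel (by omega), Nat.sub_add_cancel (by omega)] at this
  refine ⟨?_, hE' w h⟩
  intro i
  induction i generalizing w with
  | zero =>
    intro j k hj hjn hk hk1 hk2
    have := hE' _ h.rot (n - 1) (k - 1) (by omega) (by omega) (by omega)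
    rw [rot_last w (by omega), rot_lt w (by omega), rot_lt w (by omega),
      Nat.sub_add_cancel (by omega)] at this
    rw [hj]; exact this
  | succ i ih =>
    intro j k hj hjn hk hk1 hk2
    rcases Nat.eq_zero_or_pos k with h0 | h0
    · have := ih _ h.rot (i + 1) (n - 1) rfl (by omega) (by omega) (by omega) (by omega)
      rw [rot_lt w (by omega), rot_lt w (by omega), rot_last w (by omega)] at this
      rw [hj, h0]; exact this
    · have := ih _ h.rot (i + 1) (k - 1) rfl (by omega) (by omega) (by omega) (by omega)
      rw [rot_lt w (by omega), rot_lt w (by omega), rot_lt w (by omega),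
        Nat.sub_add_cancel (by omega)] at this
      rw [hj]; exact this

def InT (w : ℕ → E3) (a k : ℕ) : Prop :=
  0 < det3 (w a) (w 0) (w k) ∧ 0 < det3 (w 0) (w 1) (w k) ∧ 0 < det3 (w 1) (w a) (w k)

theorem det_comb (p q x y z : E3) (t α β : ℝ) (c d : E3)
    (h : (1 - t) • x + t • y = α • c + β • d) :
    (1 - t) * det3 p q x + t * det3 p q y = α * det3 p q c + β * det3 p q d := by
  rw [← det_lin, ← det_lin, h]

theorem corner1 {n a l : ℕ} {w : ℕ → E3} (h : Pol n w) (ha : a + 1 = n) (h4 : 4 ≤ n)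
    (hl : l + 1 = a) : InT w a l ∨ 0 < det3 (w l) (w a) (w 1) := by
  by_contra hc
  push Not at hc
  obtain ⟨hc1, hc2⟩ := hc
  have h2 : det3 (w l) (w a) (w 1) < 0 := lt_of_le_of_ne hc2
    (h.gen (by omega) (by omega) (by omega) (by omega) (by omega) (by omega))
  have hT : 0 < det3 (w a) (w 0) (w 1) := h.c2 _ ha
  have h3 : 0 < det3 (w l) (w a) (w 0) := h.c1 _ _ (by omega) ha
  have h3' : 0 < det3 (w a) (w 0) (w l) := by rw [← det_cyc]; exact h3
  have h2' : 0 < det3 (w 1) (w a) (w l) := by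
    rw [← det_cyc, det_swap]; linarith
  rcases tri_exit (w a) (w l) hT (Or.inr ⟨det_l _ _, h3'⟩)
    (Or.inl (by rw [← det_cyc]; exact hT)) (Or.inr ⟨det_r _ _, h2'⟩) with k | ⟨t, α, β, t0, t1, hα, hβ, k⟩
  · exact hc1 k
  · rcases k with k | k | k
    · have := det_comb (w a) (w 0) _ _ 0 _ _ _ _ _ k
      rw [det_l, det_r] at this
      have := mul_pos t0 h3'
      linarith
    · have := (h.s 0 1 l a rfl (by omega) (by omega) (by omega)).symm.swap (1 - t) t α β
        (by linarith) t0.le hα hβ k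
      linarith [this.2.1]
    · rw [det_r] at k; exact lt_irrefl _ k.2

theorem corner2 {n a : ℕ} {w : ℕ → E3} (h : Pol n w) (ha : a + 1 = n) (h4 : 4 ≤ n) :
    InT w a 2 ∨ 0 < det3 (w a) (w 1) (w 2) := by
  by_contra hc
  push Not at hc
  obtain ⟨hc1, hc2⟩ := hc
  have h2 : det3 (w a) (w 1) (w 2) < 0 := lt_of_le_of_ne hc2
    (h.gen (by omega) (by omega) (by omega) (by omega) (by omega) (by omega))
  have hT : 0 < det3 (w a) (w 0) (w 1) := h.c2 _ ha
  have h3 : 0 < det3 (w 0) (w 1) (w 2) := h.c _ _ _ rfl rfl (by omega)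
  have h2' : 0 < det3 (w 1) (w a) (w 2) := by
    rw [det_swap']; linarith
  rcases tri_exit (w 1) (w 2) hT (Or.inl hT) (Or.inr ⟨det_r _ _, h3⟩) 
     (Or.inr ⟨det_l _ _, h2'⟩) with k | ⟨t, α, β, t0, t1, hα, hβ, k⟩
  · exact hc1 k
  · rcases k with k | k | k
    · have := (h.s' a 1 2 ha rfl (by omega) (by omega)).symm (1 - t) t α β
        (by linarith) t0.le hα hβ k
      linarith [this.2.1]
    · have := det_comb (w 0) (w 1) _ _ 0 _ _ _ _ _ k
      rw [det_l, det_r] at this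
      have := mul_pos t0 h3
      linarith
    · rw [det_l] at k; exact lt_irrefl _ k.2

/-- a point of the cone `(p,q)`, moved towards `q`. -/
theorem nd_move {p q r s z : E3} (h : ND p q r s) {γ δ t α β : ℝ} (hγ : 0 ≤ γ) (hδ : 0 ≤ δ)
    (hz : z = γ • p + δ • q) (t0 : 0 < t) (t1 : t ≤ 1) (hα : 0 ≤ α) (hβ : 0 ≤ β)
    (e : (1 - t) • z + t • q = α • r + β • s) : False := by
  have h1 : 0 ≤ (1 - t) * γ := mul_nonneg (by linarith) hγ
  have h2 : 0 ≤ (1 - t) * δ := mul_nonneg (by linarith) hδ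
  have := h ((1 - t) * γ) ((1 - t) * δ + t) α β h1 (by linarith) hα hβ (by
    rw [← e, hz]; module)
  linarith [this.2.1]

/-- ear diagonal is not crossed when the ear is empty -/
theorem ear_nd {n a : ℕ} {w : ℕ → E3} (h : Pol n w) (ha : a + 1 = n)
    (hD : ∀ k, 2 ≤ k → k < a → ¬ InT w a k) {j : ℕ} (hj : 1 < j) (hj' : j + 1 < a) :
    ND (w a) (w 1) (w j) (w (j + 1)) := by
  have hT : 0 < det3 (w a) (w 0) (w 1) := h.c2 _ ha
  have hT' : 0 < det3 (w 0) (w 1) (w a) := by rw [← det_cyc]; exact hT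
  intro α β γ δ hα hβ hγ hδ e
  rcases pos4 (h.gen (by omega) (by omega) (by omega) (by omega) (by omega) (by omega))
    (h.gen (by omega) (by omega) (by omega) (by omega) (by omega) (by omega))
    (h.gen (by omega) (by omega) (by omega) (by omega) (by omega) (by omega))
    (h.gen (by omega) (by omega) (by omega) (by omega) (by omega) (by omega))
    hα hβ hγ hδ e with r | ⟨hα, hβ, hγ, hδ⟩
  · exact r
  exfalso
  set z := α • w a + β • w 1 with hz
  have z1 : 0 < det3 (w a) (w 0) z := by
    rw [hz, det_lin, det_l]; have := mul_pos hβ hT; linarith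
  have z2 : 0 < det3 (w 0) (w 1) z := by
    rw [hz, det_lin, det_r]; have := mul_pos hα hT'; linarith
  have z3 : det3 (w 1) (w a) z = 0 := by
    rw [hz, det_lin, det_r, det_l]; ring
  have z3' : γ * det3 (w 1) (w a) (w j) + δ * det3 (w 1) (w a) (w (j + 1)) = 0 := by
    rw [← det_lin, ← e, z3]
  have main : ∀ p q : ℕ, 2 ≤ q → q < a → ∀ γ δ : ℝ, 0 ≤ γ → 0 ≤ δ → z = γ • w p + δ • w q →
      ND (w p) (w q) (w a) (w 0) → ND (w p) (w q) (w 0) (w 1) →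
      0 < det3 (w 1) (w a) (w q) → False := by
    intro p q hq hq' γ δ hγ hδ e n1 n2 h3
    rcases tri_exit z (w q) hT (Or.inl z1) (Or.inl z2) (Or.inr ⟨z3, h3⟩) with
      k | ⟨t, α, β, t0, t1, hα, hβ, k⟩
    · exact hD q hq hq' k
    · rcases k with k | k | k
      · exact nd_move n1 hγ hδ e t0 t1 hα hβ k
      · exact nd_move n2 hγ hδ e t0 t1 hα hβ k
      · linarith [k.2]
  have n1 := (h.s' a j (j+1) ha rfl (by omega) (by omega)).symm
  have n2 := (h.s 0 1 j (j+1) rfl rfl (by omega) (by omega)).symm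
  by_cases hs : 0 < det3 (w 1) (w a) (w (j + 1))
  · exact main j (j+1) (by omega) (by omega) γ δ hγ.le hδ.le e n1 n2 hs
  · have hs' : det3 (w 1) (w a) (w (j + 1)) < 0 := lt_of_le_of_ne (not_lt.1 hs)
      (h.gen (by omega) (by omega) (by omega) (by omega) (by omega) (by omega))
    have : 0 < det3 (w 1) (w a) (w j) := by
      have := mul_pos_of_neg_of_neg hs' (neg_neg_of_pos hδ)
      by_contra hh
      have := mul_nonneg hγ.le (sub_nonneg.2 (not_lt.1 hh))
      linarith
    exact main (j+1) j (by omega) (by omega) δ γ hδ.le hγ.le (by rw [e, add_comm])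
      n1.swap n2.swap this

theorem noD {n a : ℕ} {w : ℕ → E3} (h : Pol n w) (ha : a + 1 = n)
    (IH : ∀ m < n, ∀ u, Pol m u → Cvx m u) : ∀ k, 2 ≤ k → k < a → ¬ InT w a k := by
  intro k0 hk0 hk0' hk0T
  have hT : 0 < det3 (w a) (w 0) (w 1) := h.c2 _ ha
  have hT' : 0 < det3 (w 0) (w 1) (w a) := by rw [← det_cyc]; exact hT
  -- extremal vertex
  obtain ⟨k, hk2, hka, hkT, hext⟩ : ∃ k, 2 ≤ k ∧ k < a ∧ InT w a k ∧
      ∀ d, 2 ≤ d → d < a → InT w a d → d ≠ k → 0 < det3 (w a) (w k) (w d) := by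
    classical
    have hne : ((Finset.Ico 2 a).filter (fun k => InT w a k)).Nonempty :=
      ⟨k0, by simp [hk0, hk0', hk0T]⟩
    obtain ⟨k, hk, hmin⟩ := Finset.exists_min_image _
      (fun d => det3 (w a) (w 0) (w d) / det3 (w 1) (w a) (w d)) hne
    simp only [Finset.mem_filter, Finset.mem_Ico] at hk hmin
    refine ⟨k, hk.1.1, hk.1.2, hk.2, ?_⟩
    intro d hd hd' hdT hdk
    have hm := hmin d ⟨⟨hd, hd'⟩, hdT⟩
    rw [div_le_div_iff₀ hk.2.2.2 hdT.2.2] at hm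
    have hp := pluck (w a) (w 0) (w 1) (w k) (w d)
    have h0 : 0 ≤ det3 (w a) (w 0) (w 1) * det3 (w a) (w k) (w d) := by linarith
    have h1 : 0 ≤ det3 (w a) (w k) (w d) := nonneg_of_mul_nonneg_right h0 hT
    exact lt_of_le_of_ne h1 (h.gen (by omega) (by omega) (by omega) (by omega) (by omega) (by omega)).symm
  obtain ⟨k1, k2, k3⟩ := hkT
  have hak1 : 0 < det3 (w a) (w k) (w 1) := by rw [← det_cyc]; exact k3
  -- neighbours
  have nb : ∀ x, 2 ≤ x → x < a → x ≠ k → ND (w k) (w x) (w a) (w 0) → ND (w k) (w x) (w 0) (w 1) →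
      0 < det3 (w a) (w k) (w x) := by
    intro x hx hx' hxk n1 n2
    rcases tri_exit (w k) (w x) hT (Or.inl k1) (Or.inl k2) (Or.inl k3) with
      r | ⟨t, α, β, t0, t1, hα, hβ, r⟩
    · exact hext x hx hx' r hxk
    · rcases r with r | r | r
      · have := n1 (1 - t) t α β (by linarith) t0.le hα hβ r
        linarith [this.2.1]
      · have := n2 (1 - t) t α β (by linarith) t0.le hα hβ r
        linarith [this.2.1]
      · have := det_comb (w a) (w k) _ _ 0 _ _ _ _ _ r.1
        rw [det_l, det_r] at this
        have h1 := mul_nonneg hα hak1.le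
        have h0 : 0 ≤ t * det3 (w a) (w k) (w x) := by linarith
        exact lt_of_le_of_ne (nonneg_of_mul_nonneg_right h0 t0)
          (h.gen (by omega) (by omega) (by omega) (by omega) (by omega) (by omega)).symm
  obtain ⟨kp, rfl⟩ : ∃ kp, k = kp + 1 := ⟨k - 1, by omega⟩
  have hprev : 0 < det3 (w a) (w (kp + 1)) (w kp) := by
    by_cases hb : kp = 1
    · subst hb; exact hak1
    · exact nb kp (by omega) (by omega) (by omega)
        ((h.s' a kp (kp+1) ha rfl (by omega) (by omega)).symm.swap)
        ((h.s 0 1 kp (kp+1) rfl rfl (by omega) (by omega)).symm.swap)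
  have hkne : kp + 1 + 1 ≠ a := by
    intro he
    have := h.c kp (kp+1) a rfl (by omega) (by omega)
    rw [← det_cyc, det_swap] at hprev
    have e : det3 (w kp) (w a) (w (kp + 1)) = - det3 (w kp) (w (kp+1)) (w a) := det_swap _ _ _
    linarith
  have hnext : 0 < det3 (w a) (w (kp + 1)) (w (kp + 1 + 1)) :=
    nb (kp + 1 + 1) (by omega) (by omega) (by omega)
        ((h.s' a (kp+1) (kp+1+1) ha rfl (by omega) (by omega)).symm)
        ((h.s 0 1 (kp+1) (kp+1+1) rfl rfl (by omega) (by omega)).symm)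
  -- the diagonal is not crossed
  have hdiag : ∀ j, 1 ≤ j → j + 1 < a → j ≠ kp + 1 → j ≠ kp →
      ND (w a) (w (kp + 1)) (w j) (w (j + 1)) := by
    intro j hj hja hjk hjk'
    intro α β γ δ hα hβ hγ hδ e
    rcases pos4 (h.gen (by omega) (by omega) (by omega) (by omega) (by omega) (by omega))
      (h.gen (by omega) (by omega) (by omega) (by omega) (by omega) (by omega))
      (h.gen (by omega) (by omega) (by omega) (by omega) (by omega) (by omega))
      (h.gen (by omega) (by omega) (by omega) (by omega) (by omega) (by omega))
      hα hβ hγ hδ e with r | ⟨hα, hβ, hγ, hδ⟩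
    · exact r
    exfalso
    set z := α • w a + β • w (kp + 1) with hz
    have z1 : 0 < det3 (w a) (w 0) z := by
      rw [hz, det_lin, det_l]; have := mul_pos hβ k1; linarith
    have z2 : 0 < det3 (w 0) (w 1) z := by
      rw [hz, det_lin]; have := mul_pos hα hT'; have := mul_pos hβ k2; linarith
    have z3 : 0 < det3 (w 1) (w a) z := by
      rw [hz, det_lin, det_r]; have := mul_pos hβ k3; linarith
    have z4 : det3 (w a) (w (kp + 1)) z = 0 := by
      rw [hz, det_lin, det_l, det_r]; ring
    have z4' : γ * det3 (w a) (w (kp + 1)) (w j) + δ * det3 (w a) (w (kp + 1)) (w (j + 1)) = 0 := by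
      rw [← det_lin, ← e, z4]
    have main : ∀ p q : ℕ, 1 ≤ q → q < a → q ≠ kp + 1 → ∀ γ δ : ℝ, 0 ≤ γ → 0 ≤ δ →
        z = γ • w p + δ • w q →
        ND (w p) (w q) (w a) (w 0) → (ND (w p) (w q) (w 0) (w 1) ∨ q = 2) →
        det3 (w a) (w (kp + 1)) (w q) < 0 → False := by
      intro p q hq hq' hqk γ δ hγ hδ e n1 n2 h3
      have hq1 : q ≠ 1 := by rintro rfl; linarith
      rcases tri_exit z (w q) hT (Or.inl z1) (Or.inl z2) (Or.inl z3) with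
        k | ⟨t, α, β, t0, t1, hα, hβ, k⟩
      · linarith [hext q (by omega) hq' k hqk]
      · rcases k with k | k | k
        · exact nd_move n1 hγ hδ e t0 t1 hα hβ k
        · rcases n2 with n2 | n2
          · exact nd_move n2 hγ hδ e t0 t1 hα hβ k
          · subst n2
            have := det_comb (w 0) (w 1) _ _ 0 _ _ _ _ _ k
            rw [det_l, det_r] at this
            have h5 := mul_pos t0 (h.c 0 1 2 rfl rfl (by omega))
            have h6 := mul_nonneg (sub_nonneg.2 t1) z2.le
            linarith
        · have := det_comb (w a) (w (kp + 1)) _ _ 0 _ _ _ _ _ k.1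
          rw [det_l, z4] at this
          have h5 := mul_pos t0 (neg_pos.2 h3)
          have h6 := mul_nonneg hα hak1.le
          linarith
    have n1 := (h.s' a j (j+1) ha rfl (by omega) (by omega)).symm
    by_cases hs : det3 (w a) (w (kp + 1)) (w (j + 1)) < 0
    · refine main j (j+1) (by omega) (by omega) (by omega) γ δ hγ.le hδ.le e n1 ?_ hs
      by_cases hj1 : j = 1
      · right; omega
      · left; exact (h.s 0 1 j (j+1) rfl rfl (by omega) (by omega)).symm
    · have hs' : 0 < det3 (w a) (w (kp + 1)) (w (j + 1)) := lt_of_le_of_ne (not_lt.1 hs)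
        (h.gen (by omega) (by omega) (by omega) (by omega) (by omega) (by omega)).symm
      have hs2 : det3 (w a) (w (kp + 1)) (w j) < 0 := by
        have := mul_pos hδ hs'
        by_contra hh
        have := mul_nonneg hγ.le (not_lt.1 hh)
        linarith
      have hj1 : j ≠ 1 := by rintro rfl; linarith
      exact main (j+1) j (by omega) (by omega) (by omega) δ γ hδ.le hγ.le (by rw [e, add_comm])
        n1.swap (Or.inl (h.s 0 1 j (j+1) rfl rfl (by omega) (by omega)).symm.swap) hs2
  have hdiag0 : ND (w a) (w (kp + 1)) (w 0) (w 1) := by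
    intro α β γ δ hα hβ hγ hδ e
    rcases pos4 (h.gen (by omega) (by omega) (by omega) (by omega) (by omega) (by omega))
      (h.gen (by omega) (by omega) (by omega) (by omega) (by omega) (by omega))
      (h.gen (by omega) (by omega) (by omega) (by omega) (by omega) (by omega))
      (h.gen (by omega) (by omega) (by omega) (by omega) (by omega) (by omega))
      hα hβ hγ hδ e with r | ⟨hα, hβ, hγ, hδ⟩
    · exact r
    exfalso
    have := congrArg (det3 (w 0) (w 1)) e
    rw [det_lin, det_lin, det_l, det_r] at this
    have := mul_pos hα hT'
    have := mul_pos hβ k2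
    linarith
  -- the smaller polygon
  have hB : Pol (n - (kp + 1)) (fun j => w (j + (kp + 1))) := by
    apply h.sub ha (by omega)
    · intro l hl
      rcases corner1 h ha (by omega) hl with r | r
      · have := hext l (by omega) (by omega) r (by omega)
        rw [← det_cyc] at this; exact this
      · have hl0 : 0 < det3 (w l) (w a) (w 0) := h.c1 _ _ (by omega) ha
        have hl1 := h.gen (i := l) (j := a) (k := kp + 1) (by omega) (by omega) (by omega) (by omega) (by omega) (by omega)
        have e := congrArg (det3 (w l) (w a)) (cramer3 (w a) (w 0) (w 1) (w (kp + 1)))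
        have e1 : det3 (w l) (w a) (det3 (w a) (w 0) (w 1) • w (kp + 1)) =
          det3 (w a) (w 0) (w 1) * det3 (w l) (w a) (w (kp + 1)) := by
          have := det_lin (w l) (w a) (w (kp + 1)) (w a) (det3 (w a) (w 0) (w 1)) 0
          simpa using this
        have e2 := det_lin (w l) (w a) (det3 (w 0) (w 1) (w (kp + 1)) • w a +
          det3 (w 1) (w a) (w (kp + 1)) • w 0) (w 1) 1 (det3 (w a) (w 0) (w (kp + 1)))
        rw [one_smul] at e2
        rw [e1, e2, det_lin, det_r] at e
        have p1 := mul_pos k3 hl0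
        have p2 := mul_pos k1 r
        have : 0 < det3 (w a) (w 0) (w 1) * det3 (w l) (w a) (w (kp + 1)) := by linarith
        exact pos_of_mul_pos_right this hT.le
    · exact hnext
    · intro j hj hj'
      exact hdiag j (by omega) hj' (by omega) (by omega)
  have hC := IH _ (by omega) _ hB
  -- edges of B: (j, j+1) for kp+1 ≤ j < a and (a, kp+1), indexed by j = a
  have exitB : ∀ x y : E3,
      (∀ e, kp + 1 ≤ e → e < a → 0 < det3 (w e) (w (e + 1)) x ∨
        (det3 (w e) (w (e + 1)) x = 0 ∧ 0 < det3 (w e) (w (e + 1)) y)) →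
      (0 < det3 (w a) (w (kp + 1)) x ∨ (det3 (w a) (w (kp + 1)) x = 0 ∧
        0 < det3 (w a) (w (kp + 1)) y)) →
      (∀ (e : ℕ) (t α β : ℝ), kp + 1 ≤ e → e < a → 0 < det3 (w e) (w (e + 1)) x → 0 < t → t ≤ 1 → 0 ≤ α →
        0 ≤ β → (1 - t) • x + t • y = α • w e + β • w (e + 1) → False) →
      (∀ t α β : ℝ, 0 < det3 (w a) (w (kp + 1)) x → 0 < t → t ≤ 1 → 0 ≤ α →
        0 ≤ β → (1 - t) • x + t • y = α • w a + β • w (kp + 1) → False) →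
      (∀ e, kp + 1 ≤ e → e < a → 0 < det3 (w e) (w (e + 1)) y) ∧
        0 < det3 (w a) (w (kp + 1)) y := by
    intro x y hx hx' hf hf'
    have q1 : ∀ e, e ≠ a → (if e = a then w (kp + 1) else w (e + 1)) = w (e + 1) := by
      intro e he; simp [he]
    rcases exit_lemma (Finset.Icc (kp + 1) a) w
      (fun e => if e = a then w (kp + 1) else w (e + 1)) x y (by
        intro z e he hz h0
        simp only [Finset.mem_Icc] at he hz
        have za := hz a (by omega)
        rw [if_pos rfl] at za
        have zl : ∀ e, kp + 1 ≤ e → e < a → 0 ≤ det3 (w e) (w (e + 1)) z := by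
          intro e h1 h2
          have := hz e (by omega)
          rwa [q1 e (by omega)] at this
        by_cases hea : e = a
        · subst hea
          simp only [if_true] at h0 ⊢
          obtain ⟨l, rfl⟩ : ∃ l, e = l + 1 := ⟨e - 1, by omega⟩
          have c1 := hB.c1 (l - (kp + 1)) (l + 1 - (kp + 1)) (by omega) (by omega)
          simp only [zero_add, Nat.sub_add_cancel (show kp + 1 ≤ l by omega),
            Nat.sub_add_cancel (show kp + 1 ≤ l + 1 by omega)] at c1
          exact edge_cone c1 hnext h0 (zl l (by omega) (by omega)) (zl (kp + 1) (by omega) (by omega))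
        · simp only [if_neg hea] at h0 ⊢
          have hnx : ∃ r, 0 < det3 (w e) (w (e + 1)) r ∧ 0 ≤ det3 (w (e + 1)) r z := by
            by_cases hl : e + 1 = a
            · refine ⟨w (kp + 1), ?_, ?_⟩
              · have c1 := hB.c1 (e - (kp + 1)) (e + 1 - (kp + 1)) (by omega) (by omega)
                simp only [zero_add, Nat.sub_add_cancel (show kp + 1 ≤ e by omega),
                  Nat.sub_add_cancel (show kp + 1 ≤ e + 1 by omega)] at c1
                exact c1
              · rw [hl]; exact za
            · exact ⟨w (e + 1 + 1), h.c _ _ _ rfl rfl (by omega), zl _ (by omega) (by omega)⟩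
          have hpv : ∃ o, 0 < det3 o (w e) (w (e + 1)) ∧ 0 ≤ det3 o (w e) z := by
            by_cases hl : e = kp + 1
            · refine ⟨w a, ?_, ?_⟩
              · rw [hl]; exact hnext
              · rw [hl]; exact za
            · obtain ⟨l, rfl⟩ : ∃ l, e = l + 1 := ⟨e - 1, by omega⟩
              exact ⟨w l, h.c _ _ _ rfl rfl (by omega), zl _ (by omega) (by omega)⟩
          obtain ⟨r, r1, r2⟩ := hnx
          obtain ⟨o, o1, o2⟩ := hpv
          exact edge_cone o1 r1 h0 o2 r2) (by
        intro e he
        simp only [Finset.mem_Icc] at he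
        by_cases hea : e = a
        · subst hea; simpa using hx'
        · simp only [if_neg hea]; exact hx e he.1 (by omega)) with r | r
    · refine ⟨?_, ?_⟩
      · intro e h1 h2
        have := r e (by simp; omega)
        simp only [if_neg (show e ≠ a by omega)] at this
        exact this
      · have := r a (by simp; omega)
        simp only [if_true] at this
        exact this
    · exfalso
      obtain ⟨e, he, hX, t, α, β, t0, t1, hα, hβ, hz⟩ := r
      simp only [Finset.mem_Icc] at he
      by_cases hea : e = a
      · subst hea
        simp only [if_true] at hX hz
        exact hf' t α β hX t0 t1 hα hβ hz
      · simp only [if_neg hea] at hX hz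
        exact hf e t α β he.1 (by omega) hX t0 t1 hα hβ hz
  -- kp is inside
  have start : (∀ e, kp + 1 ≤ e → e < a → 0 < det3 (w e) (w (e + 1)) (w kp)) ∧
        0 < det3 (w a) (w (kp + 1)) (w kp) := by
    apply exitB (w (kp + 1)) (w kp)
    · intro e h1 h2
      by_cases hl : e = kp + 1
      · right
        rw [hl]
        refine ⟨det_l _ _, ?_⟩
        rw [← det_cyc]
        exact h.c _ _ _ rfl rfl (by omega)
      · left
        have := hC.e (e - (kp + 1)) (e + 1 - (kp + 1)) 0 (by omega) (by omega) (by omega) (by omega) (by omega)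
        simp only [zero_add, Nat.sub_add_cancel (show kp + 1 ≤ e by omega),
                  Nat.sub_add_cancel (show kp + 1 ≤ e + 1 by omega)] at this
        exact this
    · right; exact ⟨det_r _ _, hprev⟩
    · intro e t α β h1 h2 h3 t0 t1 hα hβ hz
      have hl : e ≠ kp + 1 := by rintro rfl; rw [det_l] at h3; exact lt_irrefl _ h3
      have := (h.s kp (kp + 1) e (e + 1) rfl rfl (by omega) (by omega)).swap (1 - t) t α β
        (by linarith) t0.le hα hβ hz
      linarith [this.2.1]
    · intro t α β h3
      rw [det_r] at h3; exact absurd h3 (lt_irrefl _)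
  have all : ∀ r, r ≤ kp → (∀ e, kp + 1 ≤ e → e < a → 0 < det3 (w e) (w (e + 1)) (w (kp - r))) ∧
        0 < det3 (w a) (w (kp + 1)) (w (kp - r)) := by
    intro r
    induction r with
    | zero => intro _; exact start
    | succ r ih =>
      intro hr
      obtain ⟨i1, i2⟩ := ih (by omega)
      obtain ⟨s, hs⟩ : ∃ s, s = kp - (r + 1) := ⟨_, rfl⟩
      have hs' : kp - r = s + 1 := by omega
      rw [hs'] at i1 i2
      rw [← hs]
      apply exitB (w (s + 1)) (w s)
      · intro e h1 h2; exact Or.inl (i1 e h1 h2)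
      · exact Or.inl i2
      · intro e t α β h1 h2 h3 t0 t1 hα hβ hz
        have := (h.s s (s + 1) e (e + 1) rfl rfl (by omega) (by omega)).swap (1 - t) t α β
          (by linarith) t0.le hα hβ hz
        linarith [this.2.1]
      · intro t α β h3 t0 t1 hα hβ hz
        have hnd : ND (w a) (w (kp + 1)) (w s) (w (s + 1)) := by
          by_cases hs0 : s = 0
          · rw [hs0]; exact hdiag0
          · exact hdiag s (by omega) (by omega) (by omega) (by omega)
        have := hnd.symm.swap (1 - t) t α β (by linarith) t0.le hα hβ hz
        linarith [this.2.1]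
  have fin := (all kp le_rfl).2
  rw [Nat.sub_self, det_swap] at fin
  linarith

theorem cvx_all : ∀ n, ∀ w, Pol n w → Cvx n w := by
  intro n
  induction n using Nat.strong_induction_on with
  | _ n IH =>
  by_cases h4 : 4 ≤ n
  · have cut : ∀ w, Pol n w → ∀ i j k, j = i + 1 → 1 ≤ i → j < n → 1 ≤ k → k < n → k ≠ i → k ≠ j →
        0 < det3 (w i) (w j) (w k) := by
      intro w h i j k hj hi hjn hk hkn hki hkj
      obtain ⟨a, ha⟩ : ∃ a, a + 1 = n := ⟨n - 1, by omega⟩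
      have hD := noD h ha IH
      have hQ : Pol (n - 1) (fun j => w (j + 1)) := by
        apply h.sub ha (by omega)
        · intro l hl
          rcases corner1 h ha h4 hl with r | r
          · exact absurd r (hD l (by omega) (by omega))
          · exact r
        · rcases corner2 h ha h4 with r | r
          · exact absurd r (hD 2 (by omega) (by omega))
          · exact r
        · intro j hj hj'
          exact ear_nd h ha hD hj hj'
      have := (IH _ (by omega) _ hQ).e (i - 1) (j - 1) (k - 1) (by omega) (by omega) (by omega)
        (by omega) (by omega)
      simp only [Nat.sub_add_cancel hi, Nat.sub_add_cancel hk,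
        Nat.sub_add_cancel (show 1 ≤ j by omega)] at this
      exact this
    intro w h
    refine cvx_of_last ?_ w h
    intro w h i j k hi hj hk
    rcases Nat.eq_zero_or_pos k with h0 | h0
    · have := cut _ h.rot (i - 1) i j (by omega) (by omega) (by omega) (by omega) (by omega)
        (by omega) (by omega)
      rw [rot_lt w (by omega), rot_lt w (by omega), rot_last w (by omega),
        Nat.sub_add_cancel (by omega)] at this
      rw [h0, show j = i + 1 by omega]; exact this
    · exact cut w h i j k (by omega) (by omega) (by omega) (by omega) (by omega) (by omega) (by omega)
  · intro w h
    have hn := h.hn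
    refine cvx_of_last ?_ w h
    intro w h i j k hi hj hk
    have : k = 0 := by omega
    subst this
    exact h.c1 _ _ hi hj

/-- perturbation -/
def pert (V : ℕ → E3) (ε : ℝ) (j : ℕ) : E3 := V j + ε • !₂[(1 : ℝ), (j : ℝ), (j : ℝ) ^ 2]

theorem pert_zero (V : ℕ → E3) (j : ℕ) : pert V 0 j = V j := by simp [pert]

theorem pert_cont (V : ℕ → E3) (j : ℕ) : Continuous (fun ε => pert V ε j) := by
  unfold pert; fun_prop

theorem det_cont (V : ℕ → E3) (i j k : ℕ) :
    Continuous (fun ε => det3 (pert V ε i) (pert V ε j) (pert V ε k)) := by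
  unfold det3 pert; simp only [PiLp.add_apply, PiLp.smul_apply]; fun_prop

open Filter Topology in
theorem ev_pos (V : ℕ → E3) (i j k : ℕ) (h : 0 < det3 (V i) (V j) (V k)) :
    ∀ᶠ ε in 𝓝[>] (0:ℝ), 0 < det3 (pert V ε i) (pert V ε j) (pert V ε k) := by
  apply nhdsWithin_le_nhds
  apply (det_cont V i j k).continuousAt.eventually_const_lt
  simpa [pert_zero] using h

open Filter Topology in
theorem ev_ne (V : ℕ → E3) (i j k : ℕ) (h : i < j) (h' : j < k) :
    ∀ᶠ ε in 𝓝[>] (0:ℝ), det3 (pert V ε i) (pert V ε j) (pert V ε k) ≠ 0 := by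
  set M : ℕ → E3 := fun j => !₂[(1 : ℝ), (j : ℝ), (j : ℝ) ^ 2] with hM
  set P : Polynomial ℝ := Polynomial.C (det3 (M i) (M j) (M k)) * Polynomial.X ^ 3 +
    Polynomial.C (det3 (V i) (M j) (M k) + det3 (M i) (V j) (M k) + det3 (M i) (M j) (V k))
      * Polynomial.X ^ 2 +
    Polynomial.C (det3 (V i) (V j) (M k) + det3 (V i) (M j) (V k) + det3 (M i) (V j) (V k))
      * Polynomial.X + Polynomial.C (det3 (V i) (V j) (V k)) with hP
  have hc : det3 (M i) (M j) (M k) ≠ 0 := by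
    have e : det3 (M i) (M j) (M k) = ((j:ℝ) - i) * ((k:ℝ) - i) * ((k:ℝ) - j) := by
      simp [det3, hM]; ring
    have h1 : (i:ℝ) < j := by exact_mod_cast h
    have h2 : (j:ℝ) < k := by exact_mod_cast h'
    rw [e]
    have := mul_pos (mul_pos (sub_pos.2 h1) (sub_pos.2 (h1.trans h2))) (sub_pos.2 h2)
    exact this.ne'
  have hP0 : P ≠ 0 := by
    intro h0
    have := Polynomial.natDegree_cubic (b := det3 (V i) (M j) (M k) + det3 (M i) (V j) (M k) + det3 (M i) (M j) (V k)) (c := det3 (V i) (V j) (M k) + det3 (V i) (M j) (V k) + det3 (M i) (V j) (V k)) (d := det3 (V i) (V j) (V k)) hc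
    rw [← hP, h0] at this
    simp at this
  have hfin : Set.Finite {x | P.IsRoot x} := Polynomial.finite_setOf_isRoot hP0
  have hev : ∀ ε, P.eval ε = det3 (pert V ε i) (pert V ε j) (pert V ε k) := by
    intro ε
    simp [hP, det3, pert, hM]
    ring
  have := (hfin.subset (Set.diff_subset (t := {0}))).isClosed.isOpen_compl.mem_nhds
    (show (0:ℝ) ∈ ({x | P.IsRoot x} \ {0})ᶜ by simp)
  filter_upwards [nhdsWithin_le_nhds this, self_mem_nhdsWithin] with ε h1 h2 h3
  apply h1
  refine ⟨?_, ne_of_gt h2⟩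
  show P.eval ε = 0
  rw [hev, h3]

open Filter Topology in
theorem ev_nd (V : ℕ → E3) (i j k l : ℕ) (h : ND (V i) (V j) (V k) (V l)) :
    ∀ᶠ ε in 𝓝[>] (0:ℝ), ND (pert V ε i) (pert V ε j) (pert V ε k) (pert V ε l) := by
  apply nhdsWithin_le_nhds
  set f : ℝ → (Fin 4 → ℝ) → E3 := fun ε c => c 0 • pert V ε i + c 1 • pert V ε j -
    (c 2 • pert V ε k + c 3 • pert V ε l) with hf
  have hcont : Continuous (fun z : ℝ × (Fin 4 → ℝ) => f z.1 z.2) := by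
    have h1 := (pert_cont V i).comp (continuous_fst (X := ℝ) (Y := Fin 4 → ℝ))
    have h2 := (pert_cont V j).comp (continuous_fst (X := ℝ) (Y := Fin 4 → ℝ))
    have h3 := (pert_cont V k).comp (continuous_fst (X := ℝ) (Y := Fin 4 → ℝ))
    have h4 := (pert_cont V l).comp (continuous_fst (X := ℝ) (Y := Fin 4 → ℝ))
    simp only [Function.comp_def] at h1 h2 h3 h4
    simp only [hf]
    fun_prop
  have key := (isCompact_stdSimplex ℝ (Fin 4)).eventually_forall_of_forall_eventually
    (x₀ := (0:ℝ)) (P := fun ε c => f ε c ≠ 0) (by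
      intro c hc
      apply hcont.continuousAt.eventually_ne
      intro h0
      simp only [hf, pert_zero] at h0
      obtain ⟨a1, a2, a3, a4⟩ := h (c 0) (c 1) (c 2) (c 3) (hc.1 0) (hc.1 1) (hc.1 2) (hc.1 3)
        (sub_eq_zero.1 h0)
      have := hc.2
      simp [Fin.sum_univ_four, a1, a2, a3, a4] at this)
  filter_upwards [key] with ε hε
  intro α β γ δ hα hβ hγ hδ e
  by_contra hne
  have hs : 0 < α + β + γ + δ := by
    by_contra hs
    apply hne
    refine ⟨?_, ?_, ?_, ?_⟩ <;> linarith
  set S := α + β + γ + δ with hS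
  apply hε ![S⁻¹ * α, S⁻¹ * β, S⁻¹ * γ, S⁻¹ * δ]
  · refine ⟨?_, ?_⟩
    · intro x; fin_cases x <;> simp <;> positivity
    · simp [Fin.sum_univ_four]
      rw [← mul_add, ← mul_add, ← mul_add, ← hS, inv_mul_cancel₀ hs.ne']
  · simp only [hf]
    simp only [Matrix.cons_val]
    rw [mul_smul, mul_smul, mul_smul, mul_smul, ← smul_add, ← smul_add, e, sub_self]

theorem arc_nd {p q r s x y : E3} (h1 : det3 p q x ≠ 0) (h2 : det3 r s y ≠ 0)
    (h : Disjoint (arcSeg p q) (arcSeg r s)) : ND p q r s := by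
  intro α β γ δ hα hβ hγ hδ e
  rcases (add_nonneg hα hβ).eq_or_lt with r0 | r0
  · have a0 : α = 0 := by linarith
    have b0 : β = 0 := by linarith
    obtain ⟨c0, d0, _⟩ := indep h2 (x := γ) (y := δ) (z := 0) (by rw [← e, a0, b0]; simp)
    exact ⟨a0, b0, c0, d0⟩
  rcases (add_nonneg hγ hδ).eq_or_lt with r1 | r1
  · have a0 : γ = 0 := by linarith
    have b0 : δ = 0 := by linarith
    obtain ⟨c0, d0, _⟩ := indep h1 (x := α) (y := β) (z := 0) (by rw [e, a0, b0]; simp)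
    exact ⟨c0, d0, a0, b0⟩
  exfalso
  exact Set.disjoint_left.1 h ⟨α, β, hα, hβ, r0, rfl⟩ ⟨γ, δ, hγ, hδ, r1, by rw [e]⟩

open Filter Topology in
theorem limit_cvx (n : ℕ) (hn : 3 ≤ n) (V : ℕ → E3) (hper : V n = V 0) (hper1 : V (n + 1) = V 1)
    (hc : ∀ j, 0 < det3 (V j) (V (j + 1)) (V (j + 2)))
    (hs : ∀ i j, i + 1 < j → j < n → ¬ (i = 0 ∧ j + 1 = n) →
      ND (V i) (V (i + 1)) (V j) (V (j + 1))) :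
    ∀ k, k < n → 0 ≤ det3 (V 0) (V 1) (V k) := by
  have ev : ∀ᶠ ε in 𝓝[>] (0:ℝ), ∀ i ∈ Finset.range n, ∀ j ∈ Finset.range n, ∀ k ∈ Finset.range n,
      (0 < det3 (V i) (V j) (V k) → 0 < det3 (pert V ε i) (pert V ε j) (pert V ε k)) ∧
      (i < j → j < k → det3 (pert V ε i) (pert V ε j) (pert V ε k) ≠ 0) ∧
      ∀ l ∈ Finset.range n, ND (V i) (V j) (V k) (V l) →
        ND (pert V ε i) (pert V ε j) (pert V ε k) (pert V ε l) := by
    simp only [Filter.eventually_all_finset, Filter.eventually_and, Filter.eventually_imp_distrib_left]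
    intro i _ j _ k _
    exact ⟨ev_pos V i j k, ev_ne V i j k, fun l _ => ev_nd V i j k l⟩
  simp only [Finset.mem_range] at ev
  have evP : ∀ᶠ ε in 𝓝[>] (0:ℝ), Pol n (pert V ε) := by
    filter_upwards [ev] with ε h
    refine ⟨hn, ?_, ?_, ?_, ?_, ?_, ?_⟩
    · rintro i j k rfl rfl hk
      exact (h _ (by omega) _ (by omega) _ hk).1 (hc i)
    · intro i j hi hj
      apply (h _ (by omega) _ (by omega) _ (by omega)).1
      have := hc i
      rwa [hi, show i + 1 = j by omega, hper] at this
    · intro i hi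
      apply (h _ (by omega) _ (by omega) _ (by omega)).1
      have := hc i
      rwa [show i + 2 = n + 1 by omega, hi, hper, hper1] at this
    · intro i j k hi hj hk
      exact (h _ (by omega) _ (by omega) _ hk).2.1 hi hj
    · rintro i i' j j' rfl rfl hij hj
      exact (h _ (by omega) _ (by omega) _ (by omega)).2.2 _ hj
        (hs i j hij (by omega) (by omega))
    · rintro a j j' ha rfl h0 hja
      apply (h _ (by omega) _ (by omega) _ (by omega)).2.2 _ (by omega)
      have := (hs j a (by omega) (by omega) (by omega)).symm
      rwa [ha, hper] at this
  intro k hk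
  by_cases h0 : k = 0
  · rw [h0, det_l]
  by_cases h1 : k = 1
  · rw [h1, det_r]
  have ht : Tendsto (fun ε => det3 (pert V ε 0) (pert V ε 1) (pert V ε k)) (𝓝[>] 0)
      (𝓝 (det3 (V 0) (V 1) (V k))) := by
    have := (det_cont V 0 1 k).tendsto 0
    simp only [pert_zero] at this
    exact this.mono_left nhdsWithin_le_nhds
  refine ge_of_tendsto ht ?_
  filter_upwards [evP] with ε h
  exact ((cvx_all n _ h).e 0 1 k rfl (by omega) hk h0 h1).le


/-- Every spherical polygon (closed piecewise-geodesic curve with positive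
length geodesic edges) without self-intersection, all of whose interior
angles (measured on the left) are strictly less than `π`, is contained in a
closed hemisphere. -/
theorem statement4 (m : ℕ) (v : Fin (m + 3) → E3)
    (hunit : ∀ i, ‖v i‖ = 1)
    -- all interior angles, measured on the left side, are strictly less than π
    (hangle : ∀ i : Fin (m + 3), 0 < det3 (v (i - 1)) (v i) (v (i + 1)))
    -- adjacent edges meet exactly in their common vertex
    (hadj : ∀ i : Fin (m + 3),
      arcSeg (v i) (v (i + 1)) ∩ arcSeg (v (i + 1)) (v (i + 2)) = {v (i + 1)})
    -- non-adjacent edges are disjoint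
    (hdisj : ∀ i j : Fin (m + 3), j ≠ i → j ≠ i + 1 → i ≠ j + 1 →
      Disjoint (arcSeg (v i) (v (i + 1))) (arcSeg (v j) (v (j + 1)))) :
    ∃ u : E3, ‖u‖ = 1 ∧
      ∀ i : Fin (m + 3), ∀ x ∈ arcSeg (v i) (v (i + 1)), 0 ≤ ⟪x, u⟫ := by
  set φ : ℕ → Fin (m + 3) := fun j => ⟨j % (m + 3), Nat.mod_lt _ (by omega)⟩ with hφ
  have hsucc : ∀ j, φ (j + 1) = φ j + 1 := by
    intro j; apply Fin.ext; simp [hφ, Fin.val_add]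
  have hsub : ∀ x : Fin (m + 3), x + 1 - 1 = x := fun x => add_sub_cancel_right x 1
  have hcast : ∀ i j : ℕ, i < m + 3 → j < m + 3 → φ i = φ j → i = j := by
    intro i j hi hj h
    have := congrArg Fin.val h
    simpa [hφ, Nat.mod_eq_of_lt hi, Nat.mod_eq_of_lt hj] using this
  have hn0 : φ (m + 3) = φ 0 := by simp [hφ]
  set V : ℕ → E3 := fun j => v (φ j) with hV
  have hc : ∀ j, 0 < det3 (V j) (V (j + 1)) (V (j + 2)) := by
    intro j
    have := hangle (φ j + 1)
    rw [hsub, ← hsucc, ← hsucc] at this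
    exact this
  have hall := limit_cvx (m + 3) (by omega) V (by simp only [hV]; rw [hn0])
    (by simp only [hV]; rw [hsucc, hn0, ← hsucc]) hc (by
      intro i j hij hj hne
      refine arc_nd (hc i).ne' (hc j).ne' ?_
      have := hdisj (φ i) (φ j) ?_ ?_ ?_
      · simp only [hV]; rw [hsucc, hsucc]; exact this
      · intro h; have := hcast _ _ hj (by omega) h; omega
      · intro h
        rw [← hsucc] at h
        have := hcast j (i + 1) hj (by omega) h; omega
      · intro h
        rw [← hsucc] at h
        by_cases hl : j + 1 = m + 3
        · rw [hl, hn0] at h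
          have := hcast i 0 (by omega) (by omega) h; omega
        · have := hcast i (j + 1) (by omega) (by omega) h; omega)
  set c : E3 := !₂[V 0 1 * V 1 2 - V 0 2 * V 1 1, V 0 2 * V 1 0 - V 0 0 * V 1 2,
    V 0 0 * V 1 1 - V 0 1 * V 1 0] with hcdef
  have hin : ∀ x : E3, ⟪x, c⟫ = det3 (V 0) (V 1) x := by
    intro x
    simp [PiLp.inner_apply, Fin.sum_univ_three, hcdef, det3]
    ring
  have hc0 : c ≠ 0 := by
    intro h
    have h1 := hin (V 2)
    have h2 := hc 0
    rw [h, inner_zero_right] at h1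
    simp only [zero_add] at h2
    linarith
  have hvi : ∀ i : Fin (m + 3), 0 ≤ ⟪v i, c⟫ := by
    intro i
    rw [hin]
    have := hall i.val i.isLt
    have e : V i.val = v i := by simp [hV, hφ, Nat.mod_eq_of_lt i.isLt]
    rwa [e] at this
  refine ⟨‖c‖⁻¹ • c, ?_, ?_⟩
  · rw [norm_smul, norm_inv, norm_norm, inv_mul_cancel₀ (norm_ne_zero_iff.2 hc0)]
  · rintro i x ⟨a, b, ha, hb, -, rfl⟩
    rw [inner_smul_left, inner_smul_right, inner_add_left, inner_smul_left, inner_smul_left]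
    have h1 := hvi i
    have h2 := hvi (i + 1)
    simp only [conj_trivial]
    positivity
end
end

section
/- A spherical quadrilateral (possibly nonconvex and self-intersecting) with all four edge lengths in (0, π) and all four interior angles not equal to 0, π, or 2π is uniquely determined up to isometry of the sphere by its four interior angles together with one edge length. -/
noncomputable section
open Real
open scoped RealInnerProductSpace

/-- The initial tangent direction at `x` of the (short) geodesic arc from `x`
toward `y`. -/
def tdir (x y : E3) : E3 := y - ⟪y, x⟫ • x

/-- The interior angle at the vertex `x` of a spherical polygon with previous
vertex `p` and next vertex `q`, measured in `[0, 2π]` with respect to a fixed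
coorientation (the left side of the polygon): it is the unoriented angle
`sangle p x q` when `p` is reached from `q` by a left turn at `x`, and
`2π - sangle p x q` otherwise. -/
def iangle (p x q : E3) : ℝ :=
  if 0 ≤ det3 x (tdir x q) (tdir x p) then sangle p x q
  else 2 * π - sangle p x q


def dt (a b : Fin 3 → ℝ) : ℝ := a 0 * b 0 + a 1 * b 1 + a 2 * b 2

lemma inner_dt (x y : E3) : ⟪x, y⟫ = dt x y := by
  simp [PiLp.inner_apply, Fin.sum_univ_three, dt]; ring

def cr (a b : Fin 3 → ℝ) : Fin 3 → ℝ :=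
  ![a 1 * b 2 - a 2 * b 1, a 2 * b 0 - a 0 * b 2, a 0 * b 1 - a 1 * b 0]

lemma cr0 (a b : Fin 3 → ℝ) : cr a b 0 = a 1 * b 2 - a 2 * b 1 := rfl
lemma cr1 (a b : Fin 3 → ℝ) : cr a b 1 = a 2 * b 0 - a 0 * b 2 := rfl
lemma cr2 (a b : Fin 3 → ℝ) : cr a b 2 = a 0 * b 1 - a 1 * b 0 := rfl

lemma dt_comm (a b : Fin 3 → ℝ) : dt a b = dt b a := by simp only [dt]; ring
lemma dt_smul (r s : ℝ) (a b : Fin 3 → ℝ) : dt (r • a) (s • b) = r * s * dt a b := by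
  simp only [dt, Pi.smul_apply, smul_eq_mul]; ring
lemma cr_smul (r s : ℝ) (a b : Fin 3 → ℝ) : cr (r • a) (s • b) = (r * s) • cr a b := by
  funext k; fin_cases k <;> simp [cr] <;> ring
lemma dt_smul_left (r : ℝ) (a b : Fin 3 → ℝ) : dt (r • a) b = r * dt a b := by
  simp only [dt, Pi.smul_apply, smul_eq_mul]; ring
lemma bc (a b c d : Fin 3 → ℝ) :
    dt (cr a b) (cr c d) = dt a c * dt b d - dt a d * dt b c := by
  simp only [dt, cr0, cr1, cr2]; ring
lemma dt_self_zero (a : Fin 3 → ℝ) (h : dt a a = 0) : a 0 = 0 ∧ a 1 = 0 ∧ a 2 = 0 := by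
  simp only [dt] at h
  have h0 := mul_self_nonneg (a 0)
  have h1 := mul_self_nonneg (a 1)
  have h2 := mul_self_nonneg (a 2)
  exact ⟨mul_self_eq_zero.1 (by linarith), mul_self_eq_zero.1 (by linarith),
    mul_self_eq_zero.1 (by linarith)⟩
lemma crcr (a b c : Fin 3 → ℝ) : cr (cr a b) (cr b c) = dt (cr a b) c • b := by
  funext k; fin_cases k <;> simp [cr, dt] <;> ring

/-- interior angle facts -/
lemma angle_facts (p x q : E3) (hp : ‖p‖ = 1) (hx : ‖x‖ = 1) (hq : ‖q‖ = 1)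
    (s t : ℝ) (hs : 0 < s) (ht : 0 < t) (hs2 : s ^ 2 = 1 - dt p x ^ 2)
    (ht2 : t ^ 2 = 1 - dt x q ^ 2)
    (hA : iangle p x q ∉ ({0, π, 2 * π} : Set ℝ)) :
    dt (cr p x) (cr x q) = - Real.cos (iangle p x q) * (s * t) ∧
    dt (cr p x) q = Real.sin (iangle p x q) * (s * t) ∧ Real.sin (iangle p x q) ≠ 0 := by
  have pp : dt p p = 1 := by rw [← inner_dt, real_inner_self_eq_norm_sq, hp]; norm_num
  have xx : dt x x = 1 := by rw [← inner_dt, real_inner_self_eq_norm_sq, hx]; norm_num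
  have qq : dt q q = 1 := by rw [← inner_dt, real_inner_self_eq_norm_sq, hq]; norm_num
  have n1 : ‖p - ⟪p, x⟫ • x‖ = s := by
    have : ‖p - ⟪p, x⟫ • x‖ ^ 2 = s ^ 2 := by
      rw [← real_inner_self_eq_norm_sq, hs2]
      simp only [inner_sub_left, inner_sub_right, inner_smul_left, inner_smul_right, inner_dt,
        dt_comm x p, pp, xx]
      simp; ring
    exact (pow_left_inj₀ (norm_nonneg _) hs.le two_ne_zero).1 this
  have n2 : ‖q - ⟪q, x⟫ • x‖ = t := by
    have : ‖q - ⟪q, x⟫ • x‖ ^ 2 = t ^ 2 := by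
      rw [← real_inner_self_eq_norm_sq, ht2]
      simp only [inner_sub_left, inner_sub_right, inner_smul_left, inner_smul_right, inner_dt,
        dt_comm x q, qq, xx]
      simp; ring
    exact (pow_left_inj₀ (norm_nonneg _) ht.le two_ne_zero).1 this
  have hin : ⟪p - ⟪p, x⟫ • x, q - ⟪q, x⟫ • x⟫ = dt p q - dt p x * dt x q := by
    simp only [inner_sub_left, inner_sub_right, inner_smul_left, inner_smul_right, inner_dt,
        dt_comm q x, xx]
    simp
  have hcos : Real.cos (sangle p x q) * (s * t) = dt p q - dt p x * dt x q := by
    have := InnerProductGeometry.cos_angle_mul_norm_mul_norm (p - ⟪p, x⟫ • x) (q - ⟪q, x⟫ • x)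
    rw [n1, n2, hin] at this
    exact this
  have hst : 0 < s * t := mul_pos hs ht
  have hdet : det3 x (tdir x q) (tdir x p) = dt (cr p x) q := by
    simp only [det3, tdir, dt, cr0, cr1, cr2, PiLp.sub_apply, PiLp.smul_apply, smul_eq_mul]
    ring
  have hgram : (dt (cr p x) q) ^ 2 = 1 + 2 * dt p x * dt x q * dt p q
      - dt p x ^ 2 - dt x q ^ 2 - dt p q ^ 2 := by
    have : (dt (cr p x) q) ^ 2 = dt p p * dt x x * dt q q + 2 * dt p x * dt x q * dt p q
      - dt q q * dt p x ^ 2 - dt p p * dt x q ^ 2 - dt x x * dt p q ^ 2 := by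
      simp only [dt, cr0, cr1, cr2]; ring
    rw [this, pp, xx, qq]; ring
  have hsq : (dt (cr p x) q) ^ 2 = (Real.sin (sangle p x q) * (s * t)) ^ 2 := by
    have e : (Real.sin (sangle p x q) * (s * t)) ^ 2 =
      s ^ 2 * t ^ 2 - (Real.cos (sangle p x q) * (s * t)) ^ 2 := by
      rw [mul_pow, Real.sin_sq]; ring
    rw [e, hcos, hs2, ht2, hgram]; ring
  have h0 : 0 ≤ sangle p x q := InnerProductGeometry.angle_nonneg _ _
  have hpi : sangle p x q ≤ π := InnerProductGeometry.angle_le_pi _ _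
  have hsn : 0 ≤ Real.sin (sangle p x q) := Real.sin_nonneg_of_nonneg_of_le_pi h0 hpi
  have hb : dt (cr p x) (cr x q) = dt p x * dt x q - dt p q := by
    rw [bc, xx]; ring
  simp only [Set.mem_insert_iff, Set.mem_singleton_iff, not_or] at hA
  rw [hb]
  unfold iangle at hA ⊢
  rw [hdet] at hA ⊢
  split_ifs at hA ⊢ with h
  · refine ⟨by linarith, ?_, ?_⟩
    · exact (pow_left_inj₀ h (mul_nonneg hsn hst.le) two_ne_zero).1 hsq
    · exact (Real.sin_pos_of_pos_of_lt_pi (lt_of_le_of_ne h0 (Ne.symm hA.1))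
        (lt_of_le_of_ne hpi hA.2.1)).ne'
  · rw [Real.cos_two_pi_sub, Real.sin_two_pi_sub]
    refine ⟨by linarith, ?_, ?_⟩
    · have := (pow_left_inj₀ (a := - dt (cr p x) q) (by linarith)
        (mul_nonneg hsn hst.le) two_ne_zero).1 (by rw [neg_sq]; exact hsq)
      linarith
    · have : 0 < Real.sin (sangle p x q) := by
        refine Real.sin_pos_of_pos_of_lt_pi (lt_of_le_of_ne h0 ?_) (lt_of_le_of_ne hpi ?_)
        · intro h'; apply hA.2.2; rw [← h']; ring
        · intro h'; apply hA.2.1; rw [h']; ring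
      linarith

/-- Normalised data of a quadrilateral. -/
structure QD (v n : Fin 4 → Fin 3 → ℝ) (s C S : Fin 4 → ℝ) : Prop where
  vv : ∀ i, dt (v i) (v i) = 1
  nn : ∀ i, dt (n i) (n i) = 1
  sp : ∀ i, 0 < s i
  s2 : ∀ i, s i ^ 2 = 1 - dt (v i) (v (i + 1)) ^ 2
  hn : ∀ i, cr (v i) (v (i + 1)) = s i • n i
  hC : ∀ i, dt (n i) (n (i + 1)) = C (i + 1)
  hS : ∀ i, cr (n i) (n (i + 1)) = S (i + 1) • v (i + 1)
  S0 : ∀ i, S i ≠ 0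

lemma mkQD (v : Fin 4 → E3) (hv : ∀ i, ‖v i‖ = 1)
    (hvlen : ∀ i : Fin 4, sdist (v i) (v (i + 1)) ∈ Set.Ioo 0 π)
    (hvang : ∀ i : Fin 4,
      iangle (v (i - 1)) (v i) (v (i + 1)) ∉ ({0, π, 2 * π} : Set ℝ)) :
    ∃ n s, QD (fun i => v i) n s
      (fun i => - Real.cos (iangle (v (i - 1)) (v i) (v (i + 1))))
      (fun i => Real.sin (iangle (v (i - 1)) (v i) (v (i + 1)))) := by
  have vv : ∀ i, dt (v i) (v i) = 1 := fun i => by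
    rw [← inner_dt, real_inner_self_eq_norm_sq, hv]; norm_num
  have hc : ∀ i, 0 < 1 - dt (v i) (v (i + 1)) ^ 2 := fun i => by
    have h := hvlen i
    rw [sdist, inner_dt] at h
    have h1 : dt (v i) (v (i + 1)) < 1 := by
      by_contra hh; rw [Real.arccos_of_one_le (not_lt.1 hh)] at h; exact lt_irrefl _ h.1
    have h2 : -1 < dt (v i) (v (i + 1)) := by
      by_contra hh; rw [Real.arccos_of_le_neg_one (not_lt.1 hh)] at h; exact lt_irrefl _ h.2
    nlinarith
  let s : Fin 4 → ℝ := fun i => Real.sqrt (1 - dt (v i) (v (i + 1)) ^ 2)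
  have sp : ∀ i, 0 < s i := fun i => Real.sqrt_pos.2 (hc i)
  have s2 : ∀ i, s i ^ 2 = 1 - dt (v i) (v (i + 1)) ^ 2 := fun i => Real.sq_sqrt (hc i).le
  let n : Fin 4 → Fin 3 → ℝ := fun i => (s i)⁻¹ • cr (v i) (v (i + 1))
  have af : ∀ i : Fin 4, _ := fun i => angle_facts (v i) (v (i + 1)) (v (i + 1 + 1)) (hv _) (hv _)
    (hv _) (s i) (s (i + 1)) (sp _) (sp _) (s2 _) (s2 _) (by
      have := hvang (i + 1); rwa [add_sub_cancel_right] at this)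
  refine ⟨n, s, vv, ?_, sp, s2, ?_, ?_, ?_, ?_⟩
  · intro i
    have := sp i
    simp only [n]
    rw [dt_smul, bc, vv, vv, dt_comm (v (i + 1)) (v i)]
    field_simp
    rw [s2]
  · intro i
    simp only [n]
    rw [smul_smul, mul_inv_cancel₀ (sp i).ne', one_smul]
  · intro i
    have h1 := sp i
    have h2 := sp (i + 1)
    simp only [n]
    rw [dt_smul, (af i).1, add_sub_cancel_right]
    field_simp
  · intro i
    have h1 := sp i
    have h2 := sp (i + 1)
    simp only [n]
    rw [cr_smul, crcr, (af i).2.1, add_sub_cancel_right, smul_smul]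
    congr 1
    field_simp
  · intro i
    have := (af (i - 1)).2.2
    rw [sub_add_cancel] at this
    exact this

lemma QD.opp {v n : Fin 4 → Fin 3 → ℝ} {s C S : Fin 4 → ℝ} (h : QD v n s C S) (i : Fin 4) :
    dt (n i) (n (i + 2)) = C (i + 1) * C (i + 2) - S (i + 1) * S (i + 2) * dt (v (i + 1)) (v (i + 2))
    ∧ dt (cr (n i) (n (i + 1))) (n (i + 2)) = S (i + 1) * S (i + 2) * s (i + 1) := by
  have e : i + 2 = i + 1 + 1 := by rw [add_assoc]; rfl
  rw [e]
  have h1 := bc (n i) (n (i + 1)) (n (i + 1)) (n (i + 1 + 1))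
  rw [h.hS, h.hS, dt_smul, h.hC, h.hC, h.nn] at h1
  refine ⟨by linarith, ?_⟩
  have h2 := crcr (n i) (n (i + 1)) (n (i + 1 + 1))
  rw [h.hS (i + 1), h.hS i, cr_smul, h.hn, smul_smul] at h2
  have h3 := congrArg (fun z => dt z (n (i + 1))) h2
  simp only [dt_smul_left, h.nn, mul_one] at h3
  rw [h.hS i, dt_smul_left]; linarith

set_option maxHeartbeats 1000000 in
lemma gram_eq {v n v' n' : Fin 4 → Fin 3 → ℝ} {s s' C S : Fin 4 → ℝ}
    (h : QD v n s C S) (h' : QD v' n' s' C S) (h0 : dt (v 0) (v 1) = dt (v' 0) (v' 1)) :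
    ∀ i j, dt (v i) (v j) = dt (v' i) (v' j) := by
  have seq : ∀ i, dt (v i) (v (i + 1)) = dt (v' i) (v' (i + 1)) → s i = s' i := fun i hi =>
    (pow_left_inj₀ (h.sp i).le (h'.sp i).le two_ne_zero).1 (by rw [h.s2, h'.s2, hi])
  have a3 := h.opp 3
  have a3' := h'.opp 3
  have a1 := h.opp 1
  have a1' := h'.opp 1
  have a0 := h.opp 0
  have a0' := h'.opp 0
  have a2 := h.opp 2
  have a2' := h'.opp 2
  simp only [show (3 : Fin 4) + 1 = 0 from rfl, show (3 : Fin 4) + 2 = 1 from rfl,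
    show (1 : Fin 4) + 1 = 2 from rfl, show (1 : Fin 4) + 2 = 3 from rfl,
    show (0 : Fin 4) + 1 = 1 from rfl, show (0 : Fin 4) + 2 = 2 from rfl,
    show (2 : Fin 4) + 1 = 3 from rfl, show (2 : Fin 4) + 2 = 0 from rfl] at a0 a0' a1 a1' a2 a2' a3 a3'
  have S0 := h.S0
  have G : dt (n 3) (n 1) = dt (n' 3) (n' 1) := by rw [a3.1, a3'.1, h0]
  have c2 : dt (v 2) (v 3) = dt (v' 2) (v' 3) := by
    have h1 := a1.1
    have h2 := a1'.1
    rw [dt_comm, G] at h1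
    rw [dt_comm] at h2
    have : S 2 * S 3 * dt (v 2) (v 3) = S 2 * S 3 * dt (v' 2) (v' 3) := by linarith
    exact mul_left_cancel₀ (mul_ne_zero (S0 2) (S0 3)) this
  have s0 := seq 0 h0
  have s2 := seq 2 c2
  have key : ∀ a b c d : Fin 3 → ℝ, (dt a a * dt c c - dt a c ^ 2) * dt b d =
      dt a b * (dt c c * dt a d - dt a c * dt c d) + dt c b * (dt a a * dt c d - dt a c * dt a d)
      - dt (cr a b) c * dt (cr c d) a := by
    intro a b c d; simp only [dt, cr0, cr1, cr2]; ring
  have C0 := h.hC 3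
  have C0' := h'.hC 3
  have C1 := h.hC 0
  have C1' := h'.hC 0
  have C2 := h.hC 1
  have C2' := h'.hC 1
  have C3 := h.hC 2
  have C3' := h'.hC 2
  simp only [show (3 : Fin 4) + 1 = 0 from rfl, 
    show (1 : Fin 4) + 1 = 2 from rfl, 
    show (0 : Fin 4) + 1 = 1 from rfl, 
    show (2 : Fin 4) + 1 = 3 from rfl] at C0 C1 C2 C3 C0' C1' C2' C3'
  have X : dt (n 0) (n 2) = dt (n' 0) (n' 2) := by
    have k := key (n 3) (n 0) (n 1) (n 2)
    have k' := key (n' 3) (n' 0) (n' 1) (n' 2)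
    rw [a3.2, a1.2, h.nn, h.nn, G, C0, dt_comm (n 3) (n 2), C3, C2, dt_comm (n 1) (n 0), C1,
      s0, s2] at k
    rw [a3'.2, a1'.2, h'.nn, h'.nn, C0', dt_comm (n' 3) (n' 2), C3', C2', dt_comm (n' 1) (n' 0),
      C1'] at k'
    have ne : (1 * 1 - dt (n' 3) (n' 1) ^ 2) ≠ 0 := by
      have b := bc (n' 3) (n' 1) (n' 3) (n' 1)
      rw [h'.nn, h'.nn, dt_comm (n' 1) (n' 3), ← sq (dt (n' 3) (n' 1))] at b
      rw [← b]
      intro hz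
      have z := dt_self_zero _ hz
      have d := a3'.2
      have e : dt (cr (n' 3) (n' 0)) (n' 1) = - dt (cr (n' 3) (n' 1)) (n' 0) := by
        simp only [dt, cr0, cr1, cr2]; ring
      rw [e, dt, z.1, z.2.1, z.2.2] at d
      have := mul_ne_zero (mul_ne_zero (S0 0) (S0 1)) (h'.sp 0).ne'
      apply this; rw [← d]; ring
    exact mul_left_cancel₀ ne (k.trans k'.symm)
  have c1 : dt (v 1) (v 2) = dt (v' 1) (v' 2) := by
    have : S 1 * S 2 * dt (v 1) (v 2) = S 1 * S 2 * dt (v' 1) (v' 2) := by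
      linarith [a0.1, a0'.1]
    exact mul_left_cancel₀ (mul_ne_zero (S0 1) (S0 2)) this
  have c3 : dt (v 3) (v 0) = dt (v' 3) (v' 0) := by
    have : S 3 * S 0 * dt (v 3) (v 0) = S 3 * S 0 * dt (v' 3) (v' 0) := by
      linarith [a2.1, a2'.1, dt_comm (n 0) (n 2), dt_comm (n' 0) (n' 2)]
    exact mul_left_cancel₀ (mul_ne_zero (S0 3) (S0 0)) this
  have H0 := h.hS 3
  have H0' := h'.hS 3
  have H1 := h.hS 0
  have H1' := h'.hS 0
  have H2 := h.hS 1
  have H2' := h'.hS 1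
  have H3 := h.hS 2
  have H3' := h'.hS 2
  simp only [show (3 : Fin 4) + 1 = 0 from rfl, 
    show (1 : Fin 4) + 1 = 2 from rfl, 
    show (0 : Fin 4) + 1 = 1 from rfl, 
    show (2 : Fin 4) + 1 = 3 from rfl] at H0 H1 H2 H3 H0' H1' H2' H3'
  have d02 : dt (v 0) (v 2) = dt (v' 0) (v' 2) := by
    have b := bc (n 3) (n 0) (n 1) (n 2)
    have b' := bc (n' 3) (n' 0) (n' 1) (n' 2)
    rw [H0, H2, dt_smul, dt_comm (n 3) (n 2), C3, C1, G, X] at b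
    rw [H0', H2', dt_smul, dt_comm (n' 3) (n' 2), C3', C1'] at b'
    exact mul_left_cancel₀ (mul_ne_zero (S0 0) (S0 2)) (b.trans b'.symm)
  have d13 : dt (v 1) (v 3) = dt (v' 1) (v' 3) := by
    have b := bc (n 0) (n 1) (n 2) (n 3)
    have b' := bc (n' 0) (n' 1) (n' 2) (n' 3)
    rw [H1, H3, dt_smul, dt_comm (n 1) (n 3), dt_comm (n 0) (n 3), C0, C2, G, X] at b
    rw [H1', H3', dt_smul, dt_comm (n' 1) (n' 3), dt_comm (n' 0) (n' 3), C0', C2'] at b'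
    exact mul_left_cancel₀ (mul_ne_zero (S0 1) (S0 3)) (b.trans b'.symm)
  intro i j
  fin_cases i <;> fin_cases j <;> simp only [Fin.zero_eta, Fin.mk_one, Fin.reduceFinMk] <;>
    first
    | rw [h.vv, h'.vv]
    | assumption
    | (rw [dt_comm, dt_comm (v' _)]; assumption)

lemma det_ne {v n : Fin 4 → Fin 3 → ℝ} {s C S : Fin 4 → ℝ} (h : QD v n s C S) :
    dt (cr (v 0) (v 1)) (v 2) ≠ 0 := by
  have h1 := crcr (v 0) (v 1) (v 2)
  have e0 := h.hn 0
  have e1 := h.hn 1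
  have e2 := h.hS 0
  simp only [show (1 : Fin 4) + 1 = 2 from rfl, show (0 : Fin 4) + 1 = 1 from rfl] at e0 e1 e2
  intro hz
  rw [hz, e0, e1, cr_smul, e2, smul_smul, zero_smul] at h1
  have h2 := congrArg (fun z => dt z (v 1)) h1
  simp only [dt_smul_left, h.vv] at h2
  have := mul_ne_zero (mul_ne_zero (h.sp 0).ne' (h.sp 1).ne') (h.S0 1)
  apply this
  simpa [dt] using h2

lemma li_of_det (a : Fin 3 → E3) (h : dt (cr (a 0) (a 1)) (a 2) ≠ 0) : LinearIndependent ℝ a := by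
  rw [Fintype.linearIndependent_iff]
  intro g hg
  have hk : ∀ k, g 0 * a 0 k + g 1 * a 1 k + g 2 * a 2 k = 0 := fun k => by
    have := congrArg (fun z : E3 => z k) hg
    simpa [Fin.sum_univ_three] using this
  have x0 := hk 0
  have x1 := hk 1
  have x2 := hk 2
  have g0 : g 0 * dt (cr (a 0) (a 1)) (a 2) = 0 := by
    simp only [dt, cr0, cr1, cr2]
    linear_combination (a 1 1 * a 2 2 - a 1 2 * a 2 1) * x0 + (a 1 2 * a 2 0 - a 1 0 * a 2 2) * x1
      + (a 1 0 * a 2 1 - a 1 1 * a 2 0) * x2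
  have g1 : g 1 * dt (cr (a 0) (a 1)) (a 2) = 0 := by
    simp only [dt, cr0, cr1, cr2]
    linear_combination (a 2 1 * a 0 2 - a 2 2 * a 0 1) * x0 + (a 2 2 * a 0 0 - a 2 0 * a 0 2) * x1
      + (a 2 0 * a 0 1 - a 2 1 * a 0 0) * x2
  have g2 : g 2 * dt (cr (a 0) (a 1)) (a 2) = 0 := by
    simp only [dt, cr0, cr1, cr2]
    linear_combination (a 0 1 * a 1 2 - a 0 2 * a 1 1) * x0 + (a 0 2 * a 1 0 - a 0 0 * a 1 2) * x1
      + (a 0 0 * a 1 1 - a 0 1 * a 1 0) * x2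
  intro i
  fin_cases i
  · exact (mul_eq_zero.1 g0).resolve_right h
  · exact (mul_eq_zero.1 g1).resolve_right h
  · exact (mul_eq_zero.1 g2).resolve_right h

lemma exists_iso (v w : Fin 4 → E3) (hg : ∀ i j, ⟪v i, v j⟫ = ⟪w i, w j⟫)
    (hv : dt (cr (v 0) (v 1)) (v 2) ≠ 0) (hw : dt (cr (w 0) (w 1)) (w 2) ≠ 0) :
    ∃ g : E3 ≃ₗᵢ[ℝ] E3, ∀ i, g (v i) = w i := by
  let a : Fin 3 → E3 := fun i => v i.castSucc
  let b : Fin 3 → E3 := fun i => w i.castSucc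
  have la : LinearIndependent ℝ a := li_of_det a hv
  have lb : LinearIndependent ℝ b := li_of_det b hw
  have hc : Fintype.card (Fin 3) = Module.finrank ℝ E3 := by simp
  let A := basisOfLinearIndependentOfCardEqFinrank la hc
  let B := basisOfLinearIndependentOfCardEqFinrank lb hc
  have hA : ∀ i, A i = v i.castSucc := fun i => by simp [A, a]
  have hB : ∀ i, B i = w i.castSucc := fun i => by simp [B, b]
  let f : E3 ≃ₗ[ℝ] E3 := A.equiv B (Equiv.refl _)
  have fA : ∀ i, f (A i) = B i := fun i => by simp [f]
  have hf : ∀ x y, ⟪f x, f y⟫ = ⟪x, y⟫ := by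
    intro x y
    rw [← A.sum_repr x, ← A.sum_repr y]
    simp only [map_sum, map_smul, sum_inner, inner_sum, inner_smul_left, inner_smul_right, fA]
    simp only [hA, hB, hg]
  let g : E3 ≃ₗᵢ[ℝ] E3 := f.isometryOfInner hf
  have gf : ∀ x, g x = f x := fun x => rfl
  have gi : ∀ i : Fin 3, g (v i.castSucc) = w i.castSucc := fun i => by rw [gf, ← hA, fA, hB]
  refine ⟨g, fun i => ?_⟩
  refine Fin.lastCases ?_ gi i
  apply InnerProductSpace.ext_inner_left_basis B
  intro k
  rw [hB]
  nth_rw 1 [← gi k]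
  rw [g.inner_map_map, hg]

/-- A spherical quadrilateral, possibly nonconvex and self-intersecting, with
all four edge lengths in `(0, π)` and all four interior angles not equal to
`0`, `π` or `2π`, is uniquely determined up to an isometry of the sphere by
its four interior angles together with one edge length. -/
theorem statement18 (v w : Fin 4 → E3)
    (hv : ∀ i, ‖v i‖ = 1) (hw : ∀ i, ‖w i‖ = 1)
    (hvlen : ∀ i : Fin 4, sdist (v i) (v (i + 1)) ∈ Set.Ioo 0 π)
    (hwlen : ∀ i : Fin 4, sdist (w i) (w (i + 1)) ∈ Set.Ioo 0 π)
    (hvang : ∀ i : Fin 4,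
      iangle (v (i - 1)) (v i) (v (i + 1)) ∉ ({0, π, 2 * π} : Set ℝ))
    (hwang : ∀ i : Fin 4,
      iangle (w (i - 1)) (w i) (w (i + 1)) ∉ ({0, π, 2 * π} : Set ℝ))
    (hang : ∀ i : Fin 4,
      iangle (v (i - 1)) (v i) (v (i + 1)) = iangle (w (i - 1)) (w i) (w (i + 1)))
    (hlen : sdist (v 0) (v 1) = sdist (w 0) (w 1)) :
    ∃ g : E3 ≃ₗᵢ[ℝ] E3, ∀ i, g (v i) = w i := by
  obtain ⟨n, s, h⟩ := mkQD v hv hvlen hvang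
  obtain ⟨n', s', h'⟩ := mkQD w hw hwlen hwang
  simp only [← hang] at h'
  have h0 : ⟪v 0, v 1⟫ = ⟪w 0, w 1⟫ := by
    have b : ∀ x y : E3, ‖x‖ = 1 → ‖y‖ = 1 → ⟪x, y⟫ ∈ Set.Icc (-1 : ℝ) 1 := by
      intro x y hx hy
      have := abs_real_inner_le_norm x y
      rw [hx, hy, one_mul] at this
      exact abs_le.1 this
    exact Real.arccos_injOn (b _ _ (hv 0) (hv 1)) (b _ _ (hw 0) (hw 1)) hlen
  rw [inner_dt, inner_dt] at h0
  have G := gram_eq h h' h0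
  refine exists_iso v w (fun i j => ?_) (det_ne h) (det_ne h')
  rw [inner_dt, inner_dt]
  exact G i j
end
end
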